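/- arXiv:2206.04955 — 6 statements merged into one kernel-verified Lean document; each statement's English description precedes it below -/
import Mathlib

section
/- For every n ≥ 1, the number of binary operations · : Fin n → Fin n → Fin n that make Fin n an L-algebra with logical unit the largest element n−1 and whose natural order (x ≤ y iff x·y = e) coincides with the standard linear order on Fin n equals the Bell number B(n−1), i.e. the number of equivalence relations (Setoids) on a set with n−1 elements. -/
/-- The L-algebra axioms for a binary operation `op` with logical unit `e`. -/
def IsLAlgebra {X : Type*} (op : X → X → X) (e : X) : Prop :=
  (∀ x, op e x = x) ∧ (∀ x, op x e = e) ∧ (∀ x, op x x = e) ∧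
  (∀ x y z, op (op x y) (op x z) = op (op y x) (op y z)) ∧
  (∀ x y, op x y = e → op y x = e → x = y)

/-!
Number the elements of a finite linear L-algebra by their depth below the unit, so that `a · b` is
the unit exactly when `b ≤ a`. The cycloid equation says that `(a · b) · (a · c) = b · c` for
`a ≤ b`; hence row `a` is strictly increasing from column `a` on, and `a · b ≤ b`.

Add a new lowest element `n + 1`. If some row moves it, the first one that does is the first row `p`
that moves `n`, and the new column is determined by `v = p · (n + 1)`, which may be any number with
`p · n < v ≤ n`. If no row other than its own moves it, the extension is trivial and the value `v`
is `0`. So the numbers of linear L-algebras, sorted by the value `v`, obey the recursion of the Bell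
triangle, whose left edge consists of the Bell numbers. The number of equivalence relations is a
Bell number by removing the class of one point.
-/

open Finset in
theorem triangle_eq_sum_choose_mul_bell {R : Type*} [Semiring R] {T : ℕ → ℕ → R}
    (apex : T 0 0 = 1) (left : ∀ n, T (n + 1) 0 = T n n)
    (succ_succ : ∀ n j, j ≤ n → T (n + 1) (j + 1) = T (n + 1) j + T n j) {n j : ℕ} (hj : j ≤ n) :
    T n j = ((∑ k ∈ range (j + 1), j.choose k * (n - k).bell : ℕ) : R) := by
  induction n generalizing j with
  | zero => simp [Nat.le_zero.mp hj, apex]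
  | succ n ih =>
    induction j with
    | zero => rw [left, ih le_rfl, Nat.range_succ_eq_Iic, ← Nat.bell_succ]; simp
    | succ j ihj =>
      have pascal := sum_choose_succ_mul (fun k _ => (n + 1 - k).bell) j
      simp only [Nat.cast_id, Nat.add_sub_add_right] at pascal
      rw [succ_succ n j (by lia), ihj (by lia), ih (by lia), pascal, Nat.cast_add]

section Setoid

universe u v

variable {α : Type u} {β : Type v}

theorem card_setoid_congr (e : α ≃ β) : Nat.card (Setoid α) = Nat.card (Setoid β) :=
  Nat.card_congr
    { toFun := Setoid.comap e.symm
      invFun := Setoid.comap e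
      left_inv := fun r => by ext; simp [Setoid.comap_rel]
      right_inv := fun r => by ext; simp [Setoid.comap_rel] }

theorem finite_setoid [Finite α] : Finite (Setoid α) :=
  Finite.of_injective (fun r : Setoid α => r.r) fun _ _ h =>
    Setoid.ext fun a b => iff_of_eq (congrFun₂ h a b)

theorem setoid_option_le {r r' : Setoid (Option α)}
    (hnone : ∀ a, r none (some a) → r' none (some a))
    (hsome : ∀ a b, ¬ r none (some a) → ¬ r none (some b) →
      r (some a) (some b) → r' (some a) (some b)) : r ≤ r' := by
  rintro (_ | a) (_ | b) hab
  · exact r'.refl _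
  · exact hnone b hab
  · exact r'.symm (hnone a (r.symm hab))
  · by_cases ha : r none (some a)
    · exact r'.trans (r'.symm (hnone a ha)) (hnone b (r.trans ha hab))
    · exact hsome a b ha (fun hb => ha (r.trans hb (r.symm hab))) hab

section Block

variable {s : Finset α}

open Classical in
/-- The equivalence relation on `Option α` whose class of `none` is `s` together with `none`, and
which agrees with `t` outside of that class. -/
noncomputable def adjoinBlock (s : Finset α) (t : Setoid {a // a ∉ s}) : Setoid (Option α) :=
  Setoid.ker fun o : Option α =>
    o.bind fun a => if ha : a ∈ s then none else some (Quotient.mk t ⟨a, ha⟩)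

theorem adjoinBlock_none_some {t : Setoid {a // a ∉ s}} {a : α} :
    adjoinBlock s t none (some a) ↔ a ∈ s := by
  rw [adjoinBlock, Setoid.ker_def]
  by_cases ha : a ∈ s <;> simp [ha]

theorem adjoinBlock_some_some {t : Setoid {a // a ∉ s}} {a b : {a // a ∉ s}} :
    adjoinBlock s t (some a.1) (some b.1) ↔ t a b := by
  rw [adjoinBlock, Setoid.ker_def]
  simpa [a.2, b.2] using Quotient.eq

theorem adjoinBlock_comap_some {r : Setoid (Option α)} (hr : ∀ a, a ∈ s ↔ r none (some a)) :
    adjoinBlock s (Setoid.comap (fun a => some a.1) r) = r := by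
  apply le_antisymm <;> refine setoid_option_le (fun a => ?_) fun a b ha hb => ?_
  · rw [adjoinBlock_none_some, hr]; exact id
  · rw [adjoinBlock_none_some] at ha hb
    exact (adjoinBlock_some_some (a := ⟨a, ha⟩) (b := ⟨b, hb⟩)).mp
  · rw [adjoinBlock_none_some, hr]; exact id
  · rw [← hr] at ha hb
    exact fun hab => (adjoinBlock_some_some (a := ⟨a, ha⟩) (b := ⟨b, hb⟩)).mpr hab

end Block

open Classical in
/-- Removing the class of `none` identifies the equivalence relations on `Option α` in which this
class is `s` together with `none` with those on the complement of `s`. -/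
noncomputable def setoidEquivOfBlock [Fintype α] (s : Finset α) :
    {r : Setoid (Option α) // ({a | r none (some a)} : Finset α) = s} ≃ Setoid {a // a ∉ s} where
  toFun r := Setoid.comap (fun a => some a.1) r.1
  invFun t := ⟨adjoinBlock s t, by ext; simp [adjoinBlock_none_some]⟩
  left_inv r := Subtype.ext <| adjoinBlock_comap_some fun a => by simp [← r.2]
  right_inv t := Setoid.ext fun _ _ => adjoinBlock_some_some

theorem card_setoid_option [Fintype α] :
    Nat.card (Setoid (Option α)) = ∑ s : Finset α, Nat.card (Setoid {a // a ∉ s}) := by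
  have (s : Finset α) : Finite (Setoid {a // a ∉ s}) := finite_setoid
  rw [← Nat.card_sigma]
  exact Nat.card_congr <| (Equiv.sigmaFiberEquiv _).symm.trans <|
    Equiv.sigmaCongrRight setoidEquivOfBlock

theorem card_setoid_eq_bell (α : Type u) [Finite α] :
    Nat.card (Setoid α) = (Nat.card α).bell := by
  induction hn : Nat.card α using Nat.strong_induction_on generalizing α with
  | _ n ih =>
    cases n with
    | zero =>
      have : IsEmpty α := (Finite.card_eq_zero_iff).mp hn
      rw [Nat.bell_zero, Nat.card_eq_one_iff_unique]
      exact ⟨⟨fun r r' => Setoid.ext fun a => isEmptyElim a⟩, ⟨⊥⟩⟩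
    | succ n =>
      obtain ⟨e⟩ : Nonempty (α ≃ Option (ULift.{u} (Fin n))) :=
        Finite.card_eq.mp (by simp [hn])
      calc
        Nat.card (Setoid α)
          = ∑ s : Finset (ULift.{u} (Fin n)), Nat.card (Setoid {a // a ∉ s}) := by
            rw [card_setoid_congr e, card_setoid_option]
        _ = ∑ s : Finset (ULift.{u} (Fin n)), (n - s.card).bell :=
            Finset.sum_congr rfl fun s _ => ih _ (by lia) _ (by simp)
        _ = (n + 1).bell := by
            rw [← Finset.powerset_univ, Finset.sum_powerset_apply_card fun k => (n - k).bell,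
              Nat.bell_succ, ← Nat.range_succ_eq_Iic]
            simp

end Setoid

namespace IsLAlgebra

variable {X Y : Type*} {op : X → X → X} {e : X}

theorem op_op_op_of_op_eq (h : IsLAlgebra op e) {x y : X} (hyx : op y x = e) (z : X) :
    op (op x y) (op x z) = op y z := by
  obtain ⟨unit_op, -, -, cycloid, -⟩ := h
  rw [cycloid, hyx, unit_op]

theorem of_injective {op' : Y → Y → Y} {φ : X → Y} (h : IsLAlgebra op' (φ e))
    (hφ : Function.Injective φ) (map_op : ∀ x y, φ (op x y) = op' (φ x) (φ y)) :
    IsLAlgebra op e := by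
  obtain ⟨unit_op, op_unit, op_self, cycloid, antisymm⟩ := h
  refine ⟨fun x => hφ ?_, fun x => hφ ?_, fun x => hφ ?_, fun x y z => hφ ?_,
    fun x y hxy hyx => hφ (antisymm _ _ ?_ ?_)⟩
  · rw [map_op, unit_op]
  · rw [map_op, op_unit]
  · rw [map_op, op_self]
  · simp only [map_op, cycloid (φ x)]
  · rw [← map_op, hxy]
  · rw [← map_op, hyx]

theorem of_op_eq_unit_iff [LinearOrder X] (unit_op : ∀ x, op e x = x)
    (op_eq_unit_iff : ∀ x y, op x y = e ↔ y ≤ x)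
    (op_op_op : ∀ x y z, x < y → y < z → op (op x y) (op x z) = op y z) : IsLAlgebra op e := by
  have op_self (x) : op x x = e := (op_eq_unit_iff x x).mpr le_rfl
  have op_le_op {x y z : X} (hzy : z ≤ y) : op x z ≤ op x y := by
    rcases hzy.eq_or_lt with rfl | hzy
    · exact le_rfl
    by_contra! hlt
    rcases lt_or_ge x z with hxz | hzx
    · have hzy_unit : op z y = e := by
        rw [← op_op_op x z y hxz hzy, op_eq_unit_iff]
        exact hlt.le
      exact hzy.not_ge ((op_eq_unit_iff z y).mp hzy_unit)
    · rw [(op_eq_unit_iff x z).mpr hzx] at hlt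
      exact hlt.ne ((unit_op _).symm.trans ((op_eq_unit_iff e _).mpr hlt.le))
  have op_op_op_of_le {x y : X} (hxy : x ≤ y) (z : X) : op (op x y) (op x z) = op y z := by
    rcases hxy.eq_or_lt with rfl | hxy
    · rw [op_self, unit_op]
    rcases lt_or_ge y z with hyz | hzy
    · exact op_op_op x y z hxy hyz
    · rw [(op_eq_unit_iff y z).mpr hzy, op_eq_unit_iff]
      exact op_le_op hzy
  refine ⟨unit_op, fun x => ?_, op_self, fun x y z => ?_, fun x y hxy hyx => ?_⟩
  · rw [op_eq_unit_iff]
    exact le_of_not_gt fun hxe => hxe.ne <| by rw [← unit_op x, op_eq_unit_iff]; exact hxe.le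
  · rcases le_total x y with hxy | hyx
    · rw [op_op_op_of_le hxy, (op_eq_unit_iff y x).mpr hxy, unit_op]
    · rw [op_op_op_of_le hyx, (op_eq_unit_iff x y).mpr hyx, unit_op]
  · exact le_antisymm ((op_eq_unit_iff y x).mp hyx) ((op_eq_unit_iff x y).mp hxy)

end IsLAlgebra

/-- The linear L-algebras on `ℕ` with unit `0` whose natural order is the reverse of the usual one,
and in which the elements beyond `n` form a trivial tail. Such a structure is determined by its
restriction to `{0, …, n}`, where `a` stands for the `a`-th element below the unit; the tail makes
all identities unconditional. -/
structure IsDepthLAlgebra (n : ℕ) (f : ℕ → ℕ → ℕ) : Prop where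
  isLAlgebra : IsLAlgebra f 0
  eq_zero_iff : ∀ a b, f a b = 0 ↔ b ≤ a
  eq_right : ∀ a b, n < b → a < b → f a b = b

namespace IsDepthLAlgebra

variable {n : ℕ} {f : ℕ → ℕ → ℕ}

theorem zero_apply (hf : IsDepthLAlgebra n f) (b : ℕ) : f 0 b = b :=
  hf.isLAlgebra.1 b

theorem apply_eq_zero (hf : IsDepthLAlgebra n f) {a b : ℕ} (hba : b ≤ a) : f a b = 0 :=
  (hf.eq_zero_iff a b).mpr hba

theorem apply_apply_apply (hf : IsDepthLAlgebra n f) {a b : ℕ} (hab : a ≤ b) (c : ℕ) :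
    f (f a b) (f a c) = f b c :=
  hf.isLAlgebra.op_op_op_of_op_eq (hf.apply_eq_zero hab) c

theorem apply_le_apply_iff (hf : IsDepthLAlgebra n f) {a b c : ℕ} (hab : a ≤ b) :
    f a c ≤ f a b ↔ c ≤ b := by
  rw [← hf.eq_zero_iff, hf.apply_apply_apply hab, hf.eq_zero_iff]

theorem apply_lt_apply (hf : IsDepthLAlgebra n f) {a b c : ℕ} (hab : a ≤ b) (hbc : b < c) :
    f a b < f a c :=
  not_le.mp fun h => hbc.not_ge ((hf.apply_le_apply_iff hab).mp h)

theorem apply_add_le_apply_add (hf : IsDepthLAlgebra n f) {a b : ℕ} (hab : a ≤ b) (k : ℕ) :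
    f a b + k ≤ f a (b + k) := by
  induction k with
  | zero => exact le_rfl
  | succ k ih => exact ih.trans_lt (hf.apply_lt_apply (by lia) (by lia))

theorem apply_le (hf : IsDepthLAlgebra n f) (a b : ℕ) : f a b ≤ b := by
  rcases le_or_gt b a with hba | hab
  · simp [hf.apply_eq_zero hba]
  -- Row `a` increases strictly from column `b` on and eventually is the identity.
  · have := hf.apply_add_le_apply_add hab.le (n + 1)
    have := hf.eq_right a (b + (n + 1)) (by lia) (by lia)
    lia

theorem apply_eq_right_of_le (hf : IsDepthLAlgebra n f) {a b c : ℕ} (hab : a < b)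
    (hb : f a b = b) (hbc : b ≤ c) : f a c = c := by
  obtain ⟨k, rfl⟩ := Nat.exists_eq_add_of_le hbc
  have := hf.apply_add_le_apply_add hab.le k
  have := hf.apply_le a (b + k)
  lia

theorem mono (hf : IsDepthLAlgebra n f) {m : ℕ} (hnm : n ≤ m) : IsDepthLAlgebra m f :=
  { hf with eq_right := fun a b hb => hf.eq_right a b (hnm.trans_lt hb) }

end IsDepthLAlgebra

/-- The operation that agrees with `h` on pairs `a < b ≤ n` and is continued by the zero value for
`b ≤ a` and by the trivial tail for `n < b`. -/
def stabilize (n : ℕ) (h : ℕ → ℕ → ℕ) (a b : ℕ) : ℕ :=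
  if b ≤ a then 0 else if b ≤ n then h a b else b

theorem stabilize_of_lt {n a b : ℕ} {h : ℕ → ℕ → ℕ} (hab : a < b) (hb : n < b) :
    stabilize n h a b = b := by
  rw [stabilize, if_neg hab.not_ge, if_neg hb.not_ge]

theorem stabilize_of_le {n a b : ℕ} {h : ℕ → ℕ → ℕ} (hab : b ≤ a → h a b = 0) (hb : b ≤ n) :
    stabilize n h a b = h a b := by
  grind [stabilize]

theorem isDepthLAlgebra_stabilize_of_forall_le {n : ℕ} {h : ℕ → ℕ → ℕ}
    (eq_zero_iff : ∀ a b, a ≤ n → b ≤ n → (h a b = 0 ↔ b ≤ a))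
    (le : ∀ a b, a ≤ n → b ≤ n → h a b ≤ n) (zero_left : ∀ b, b ≤ n → h 0 b = b)
    (cycloid : ∀ a b c, a < b → b < c → c ≤ n → h (h a b) (h a c) = h b c) :
    IsDepthLAlgebra n (stabilize n h) := by
  have agree {a b} (ha : a ≤ n) (hb : b ≤ n) : stabilize n h a b = h a b :=
    stabilize_of_le (eq_zero_iff a b ha hb).mpr hb
  have stabilize_eq_zero_iff (a b) : stabilize n h a b = 0 ↔ b ≤ a := by
    have := eq_zero_iff a b
    grind [stabilize]
  refine ⟨.of_op_eq_unit_iff (fun b => ?_) stabilize_eq_zero_iff fun a b c hab hbc => ?_,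
    stabilize_eq_zero_iff, fun a b hb hab => stabilize_of_lt hab hb⟩
  · have := zero_left b
    grind [stabilize]
  · rcases le_or_gt c n with hc | hc
    · have hb : b ≤ n := hbc.le.trans hc
      have ha : a ≤ n := hab.le.trans hb
      rw [agree ha hb, agree ha hc, agree hb hc, agree (le a b ha hb) (le a c ha hc),
        cycloid a b c hab hbc hc]
    · have stabilize_lt : stabilize n h a b < c := by
        have := le a b
        grind [stabilize]
      rw [stabilize_of_lt (hab.trans hbc) hc, stabilize_of_lt stabilize_lt hc,
        stabilize_of_lt hbc hc]

theorem isDepthLAlgebra_stabilize {n m : ℕ} {f : ℕ → ℕ → ℕ} (hf : IsDepthLAlgebra m f) :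
    IsDepthLAlgebra n (stabilize n f) :=
  isDepthLAlgebra_stabilize_of_forall_le (fun a b _ _ => hf.eq_zero_iff a b)
    (fun a b _ hb => (hf.apply_le a b).trans hb) (fun b _ => hf.zero_apply b)
    fun _ _ c hab _ _ => hf.apply_apply_apply hab.le c

theorem stabilize_eq_of_forall_le {n : ℕ} {f h : ℕ → ℕ → ℕ} (hf : IsDepthLAlgebra n f)
    (hfh : ∀ a b, a < b → b ≤ n → h a b = f a b) : stabilize n h = f := by
  ext a b
  have := hf.eq_zero_iff a b
  have := hf.eq_right a b
  grind [stabilize]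

section Pivot

/-- The least `a` for which `a < n` implies `f a n < n`: the first row that moves `n`, counting row
`n`, which sends `n` to `0`. It is `0` if `n = 0`. -/
def pivot (n : ℕ) (f : ℕ → ℕ → ℕ) : ℕ :=
  Nat.find (p := fun a => a < n → f a n < n) ⟨n, fun h => absurd h n.lt_irrefl⟩

/-- The value of the pivot row at `n`. It lies below `n` if `n` is positive, and sorting the
operations with trivial tail beyond `n` by this value produces the Bell triangle. -/
def pivotValue (n : ℕ) (f : ℕ → ℕ → ℕ) : ℕ := f (pivot n f) n

variable {m n : ℕ} {f : ℕ → ℕ → ℕ}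

theorem pivot_le (n : ℕ) (f : ℕ → ℕ → ℕ) : pivot n f ≤ n :=
  Nat.find_min' _ fun h => absurd h n.lt_irrefl

theorem apply_pivot_lt (h : pivot n f < n) : f (pivot n f) n < n :=
  Nat.find_spec (p := fun a => a < n → f a n < n) _ h

theorem pivot_le_of_apply_lt {a : ℕ} (h : f a n < n) : pivot n f ≤ a :=
  Nat.find_min' _ fun _ => h

theorem pivot_congr {g : ℕ → ℕ → ℕ} (h : ∀ a < n, f a n = g a n) : pivot n f = pivot n g :=
  Nat.find_congr' fun {a} => forall_congr' fun ha => by rw [h a ha]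

namespace IsDepthLAlgebra

theorem apply_of_lt_pivot (hf : IsDepthLAlgebra m f) {a : ℕ} (ha : a < pivot n f) : f a n = n :=
  (hf.apply_le a n).eq_or_lt.resolve_right fun h => ha.not_ge (pivot_le_of_apply_lt h)

theorem pivotValue_lt (hf : IsDepthLAlgebra m f) (hn : 0 < n) : pivotValue n f < n := by
  rcases (pivot_le n f).eq_or_lt with hp | hp
  · rwa [pivotValue, hp, hf.apply_eq_zero le_rfl]
  · exact apply_pivot_lt hp

theorem apply_pivot_of_lt (hf : IsDepthLAlgebra m f) {a : ℕ} (ha : a < pivot n f) :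
    f a (pivot n f) = pivot n f := by
  refine (hf.apply_le a _).antisymm ?_
  rcases (pivot_le n f).eq_or_lt with hp | hp
  · rw [hp, hf.apply_of_lt_pivot ha]
  · apply pivot_le_of_apply_lt
    have := hf.apply_apply_apply ha.le n
    rw [hf.apply_of_lt_pivot ha] at this
    exact this.trans_lt (apply_pivot_lt hp)

theorem pivot_apply_lt (hf : IsDepthLAlgebra m f) {a : ℕ} (hpa : pivot n f < a) (han : a ≤ n) :
    f (pivot n f) a < a := by
  refine (hf.apply_le _ a).lt_of_ne fun ha => ?_
  exact (apply_pivot_lt (hpa.trans_le han)).ne (hf.apply_eq_right_of_le hpa ha han)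

theorem pivot_succ_eq_pivot (hf : IsDepthLAlgebra m f) (h : pivot (n + 1) f ≤ n) :
    pivot (n + 1) f = pivot n f := by
  have apply_of_lt {a : ℕ} (ha : a < pivot n f) : f a (n + 1) = n + 1 :=
    hf.apply_eq_right_of_le (ha.trans_le (pivot_le n f)) (hf.apply_of_lt_pivot ha) n.le_succ
  have hlt : f (pivot (n + 1) f) (n + 1) < n + 1 := apply_pivot_lt (by lia)
  refine (pivot_le_of_apply_lt ?_).antisymm (le_of_not_gt fun h => hlt.ne (apply_of_lt h))
  by_contra! hp
  have hp := (hf.apply_le _ _).antisymm hp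
  -- If row `p = pivot n f` fixes `n + 1`, then row `a` acts on it as the earlier row `f p a` does.
  have apply_eq (a : ℕ) (ha : a ≤ n) : f a (n + 1) = n + 1 := by
    induction a using Nat.strong_induction_on with
    | _ a ih =>
      rcases lt_trichotomy a (pivot n f) with hap | rfl | hpa
      · exact apply_of_lt hap
      · exact hp
      · have hlt := hf.pivot_apply_lt hpa ha
        rw [← hf.apply_apply_apply hpa.le, hp]
        exact ih _ hlt (hlt.le.trans ha)
  exact hlt.ne (apply_eq _ h)

end IsDepthLAlgebra

theorem setOf_pivotValue_succ_eq_zero (n : ℕ) :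
    {f | IsDepthLAlgebra (n + 1) f ∧ pivotValue (n + 1) f = 0} = {f | IsDepthLAlgebra n f} := by
  ext f
  refine ⟨fun ⟨hf, hp⟩ => { hf with eq_right := fun a b hb hab => ?_ }, fun hf => ?_⟩
  · rw [pivotValue, hf.eq_zero_iff] at hp
    rcases (Nat.succ_le_of_lt hb).eq_or_lt with rfl | hb
    · exact hf.apply_of_lt_pivot (hab.trans_le hp)
    · exact hf.eq_right a b hb hab
  · refine ⟨hf.mono n.le_succ, hf.apply_eq_zero (le_of_not_gt fun hp => ?_)⟩
    exact (apply_pivot_lt hp).ne (hf.eq_right _ _ n.lt_succ_self hp)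

end Pivot

section Extend

/-- The operation obtained from an operation `f` with trivial tail beyond `n` by prescribing the
value `v` of the pivot row at `n + 1`. The rows before the pivot `p` fix `n + 1`; in the others the
entry is forced by the cycloid equation `f (f p a) (f p (n + 1)) = f a (n + 1)`. -/
def extend (n v : ℕ) (f : ℕ → ℕ → ℕ) (a : ℕ) : ℕ → ℕ :=
  Function.update (f a) (n + 1) (if a < pivot n f then n + 1 else f (f (pivot n f) a) v)

variable {m n v : ℕ} {f : ℕ → ℕ → ℕ}

theorem extend_of_ne {a b : ℕ} (hb : b ≠ n + 1) : extend n v f a b = f a b :=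
  Function.update_of_ne hb ..

theorem extend_of_lt_pivot {a : ℕ} (ha : a < pivot n f) : extend n v f a (n + 1) = n + 1 := by
  rw [extend, Function.update_self, if_pos ha]

theorem extend_of_pivot_le {a : ℕ} (ha : pivot n f ≤ a) :
    extend n v f a (n + 1) = f (f (pivot n f) a) v := by
  rw [extend, Function.update_self, if_neg ha.not_gt]

theorem extend_le (hf : IsDepthLAlgebra n f) (hv : v ≤ n) (a b : ℕ) : extend n v f a b ≤ b := by
  rcases ne_or_eq b (n + 1) with hb | rfl
  · exact (extend_of_ne hb).trans_le (hf.apply_le a b)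
  rcases lt_or_ge a (pivot n f) with hap | hpa
  · exact (extend_of_lt_pivot hap).le
  · exact (extend_of_pivot_le hpa).trans_le ((hf.apply_le _ v).trans (by lia))

theorem extend_eq_zero_iff (hf : IsDepthLAlgebra n f) (hpv : pivotValue n f < v) (hv : v ≤ n)
    (a b : ℕ) : extend n v f a b = 0 ↔ b ≤ a := by
  have hp := pivot_le n f
  rcases ne_or_eq b (n + 1) with hb | rfl
  · rw [extend_of_ne hb, hf.eq_zero_iff]
  rcases lt_or_ge a (pivot n f) with hap | hpa
  · rw [extend_of_lt_pivot hap]; lia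
  rw [extend_of_pivot_le hpa, hf.eq_zero_iff]
  rcases le_or_gt a n with ha | ha
  · have := (hf.apply_le_apply_iff hp).mpr ha
    rw [pivotValue] at hpv
    lia
  · rw [hf.eq_right _ a ha (by lia)]
    lia

theorem extend_extend_extend_last (hf : IsDepthLAlgebra n f) (hv : v ≤ n) {a b : ℕ} (hab : a < b)
    (hb : b ≤ n) :
    extend n v f (extend n v f a b) (extend n v f a (n + 1)) = extend n v f b (n + 1) := by
  rw [extend_of_ne (b := b) (by lia)]
  rcases lt_or_ge a (pivot n f) with hap | hpa
  · rw [extend_of_lt_pivot hap]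
    rcases lt_or_ge b (pivot n f) with hbp | hpb
    · rw [extend_of_lt_pivot hbp, extend_of_lt_pivot ((hf.apply_le a b).trans_lt hbp)]
    · rw [hf.apply_eq_right_of_le hap (hf.apply_pivot_of_lt hap) hpb]
  · have hle := hf.apply_le (f (pivot n f) a) v
    have hpab : f (pivot n f) a ≤ f (pivot n f) b := (hf.apply_lt_apply hpa hab).le
    rw [extend_of_pivot_le hpa, extend_of_pivot_le (hpa.trans hab.le), extend_of_ne (by lia),
      ← hf.apply_apply_apply hpa b, hf.apply_apply_apply hpab]

theorem isDepthLAlgebra_extend (hf : IsDepthLAlgebra n f) (hpv : pivotValue n f < v) (hv : v ≤ n) :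
    IsDepthLAlgebra (n + 1) (extend n v f) := by
  refine ⟨.of_op_eq_unit_iff (fun b => ?_) (extend_eq_zero_iff hf hpv hv) fun a b c hab hbc => ?_,
    extend_eq_zero_iff hf hpv hv, fun a b hb hab => ?_⟩
  · rcases ne_or_eq b (n + 1) with hb | rfl
    · rw [extend_of_ne hb, hf.zero_apply]
    · have pivot_ne_zero : pivot n f ≠ 0 := fun hp => by
        rw [pivotValue, hp, hf.zero_apply] at hpv
        lia
      exact extend_of_lt_pivot (by lia)
  · rcases lt_trichotomy c (n + 1) with hc | rfl | hc
    · have := hf.apply_le a c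
      rw [extend_of_ne (b := b) (by lia), extend_of_ne (b := c) (by lia),
        extend_of_ne (b := c) (by lia), extend_of_ne (by lia), hf.apply_apply_apply hab.le]
    · exact extend_extend_extend_last hf hv hab (by lia)
    · have extend_lt : extend n v f a b < c := (extend_le hf hv a b).trans_lt hbc
      simp only [extend_of_ne hc.ne']
      rw [hf.eq_right a c (by lia) (by lia), extend_of_ne hc.ne',
        hf.eq_right _ c (by lia) extend_lt, hf.eq_right b c (by lia) hbc]
  · rw [extend_of_ne (by lia), hf.eq_right a b (by lia) hab]

theorem extend_pivot (hf : IsDepthLAlgebra n f) : extend n v f (pivot n f) (n + 1) = v := by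
  rw [extend_of_pivot_le le_rfl, hf.apply_eq_zero le_rfl, hf.zero_apply]

theorem pivot_extend (hf : IsDepthLAlgebra n f) (hv : v ≤ n) :
    pivot (n + 1) (extend n v f) = pivot n f := by
  have apply_pivot := extend_pivot (v := v) hf
  refine (pivot_le_of_apply_lt (by lia)).antisymm (le_of_not_gt fun hlt => ?_)
  have hp := pivot_le n f
  exact (apply_pivot_lt (by lia)).ne (extend_of_lt_pivot hlt)

theorem pivotValue_extend (hf : IsDepthLAlgebra n f) (hv : v ≤ n) :
    pivotValue (n + 1) (extend n v f) = v := by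
  rw [pivotValue, pivot_extend hf hv, extend_pivot hf]

theorem stabilize_extend (hf : IsDepthLAlgebra n f) : stabilize n (extend n v f) = f :=
  stabilize_eq_of_forall_le hf fun _ _ _ hb => extend_of_ne (by lia)

theorem pivot_stabilize {g : ℕ → ℕ → ℕ} (hg : IsDepthLAlgebra m g)
    (hpos : 0 < pivotValue (n + 1) g) : pivot n (stabilize n g) = pivot (n + 1) g := by
  have hp : pivot (n + 1) g ≤ n := by
    by_contra! hp
    exact hpos.ne' (hg.apply_eq_zero hp)
  rw [hg.pivot_succ_eq_pivot hp]
  exact pivot_congr fun a _ => stabilize_of_le hg.apply_eq_zero le_rfl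

theorem pivotValue_stabilize_lt {g : ℕ → ℕ → ℕ} (hg : IsDepthLAlgebra m g)
    (hpos : 0 < pivotValue (n + 1) g) : pivotValue n (stabilize n g) < pivotValue (n + 1) g := by
  have hp := pivot_le n (stabilize n g)
  rw [pivotValue, pivotValue, stabilize_of_le hg.apply_eq_zero le_rfl, ← pivot_stabilize hg hpos]
  exact hg.apply_lt_apply hp n.lt_succ_self

theorem extend_stabilize {g : ℕ → ℕ → ℕ} (hg : IsDepthLAlgebra (n + 1) g)
    (hpos : 0 < pivotValue (n + 1) g) :
    extend n (pivotValue (n + 1) g) (stabilize n g) = g := by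
  have hv : pivotValue (n + 1) g ≤ n := Nat.le_of_lt_succ (hg.pivotValue_lt n.succ_pos)
  have hp := pivot_stabilize hg hpos
  have hpn := pivot_le n (stabilize n g)
  ext a b
  rcases ne_or_eq b (n + 1) with hb | rfl
  · rw [extend_of_ne hb]
    have := hg.eq_zero_iff a b
    have := hg.eq_right a b
    grind [stabilize]
  rcases lt_or_ge a (pivot n (stabilize n g)) with hap | hpa
  · rw [extend_of_lt_pivot hap, hg.apply_of_lt_pivot (hp ▸ hap)]
  rw [extend_of_pivot_le hpa, stabilize_of_le hg.apply_eq_zero hv]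
  rcases le_or_gt a n with ha | ha
  · rw [stabilize_of_le hg.apply_eq_zero ha, pivotValue, ← hp, hg.apply_apply_apply hpa]
  · rw [stabilize_of_lt (hpn.trans_lt ha) ha, hg.apply_eq_zero (by lia), hg.apply_eq_zero ha]

theorem bijOn_extend (hv₀ : 0 < v) (hv : v ≤ n) :
    Set.BijOn (extend n v) {f | IsDepthLAlgebra n f ∧ pivotValue n f < v}
      {f | IsDepthLAlgebra (n + 1) f ∧ pivotValue (n + 1) f = v} := by
  refine Set.InvOn.bijOn (f' := stabilize n) ⟨fun f hf => stabilize_extend hf.1, ?_⟩ ?_ ?_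
  · rintro g ⟨hg, rfl⟩
    exact extend_stabilize hg hv₀
  · exact fun f ⟨hf, hpv⟩ => ⟨isDepthLAlgebra_extend hf hpv hv, pivotValue_extend hf hv⟩
  · rintro g ⟨hg, rfl⟩
    exact ⟨isDepthLAlgebra_stabilize hg, pivotValue_stabilize_lt hg hv₀⟩

end Extend

section Count

theorem setOf_isDepthLAlgebra_zero :
    {f | IsDepthLAlgebra 0 f} = {stabilize 0 fun _ b => b} := by
  refine Set.eq_singleton_iff_unique_mem.mpr ⟨?_, fun f hf => ?_⟩
  · exact isDepthLAlgebra_stabilize_of_forall_le (by lia) (by lia) (by lia) (by lia)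
  · exact (stabilize_eq_of_forall_le hf (by lia)).symm

theorem encard_pivotValue_le_succ {n j : ℕ} (hj : j < n) :
    {f | IsDepthLAlgebra (n + 1) f ∧ pivotValue (n + 1) f ≤ j + 1}.encard =
      {f | IsDepthLAlgebra (n + 1) f ∧ pivotValue (n + 1) f ≤ j}.encard +
        {f | IsDepthLAlgebra n f ∧ pivotValue n f ≤ j}.encard := by
  have last : {f | IsDepthLAlgebra (n + 1) f ∧ pivotValue (n + 1) f = j + 1}.encard =
      {f | IsDepthLAlgebra n f ∧ pivotValue n f ≤ j}.encard := by
    simp only [← Nat.lt_succ_iff (n := j)]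
    exact (Set.encard_congr ((bijOn_extend j.succ_pos hj).equiv _)).symm
  rw [← last, ← Set.encard_union_eq]
  · congr 1
    ext f
    simp only [Set.mem_ofPred_eq, Set.mem_union, ← and_or_left, Nat.le_succ_iff]
  · exact Set.disjoint_left.mpr fun f hf hf' => by have := hf.2; have := hf'.2; lia

theorem encard_isDepthLAlgebra (n : ℕ) : {f | IsDepthLAlgebra n f}.encard = n.bell := by
  let T (n j : ℕ) : ℕ∞ := {f | IsDepthLAlgebra (n + 1) f ∧ pivotValue (n + 1) f ≤ j}.encard
  have T_zero (n) : T n 0 = {f | IsDepthLAlgebra n f}.encard := by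
    simp only [T, Nat.le_zero, setOf_pivotValue_succ_eq_zero]
  have T_self (n) : T n n = {f | IsDepthLAlgebra (n + 1) f}.encard := by
    refine congrArg Set.encard (Set.ext fun f => and_iff_left_of_imp fun hf => ?_)
    exact Nat.le_of_lt_succ (hf.pivotValue_lt n.succ_pos)
  have T_zero_zero : T 0 0 = 1 := by
    rw [T_zero, setOf_isDepthLAlgebra_zero, Set.encard_singleton]
  rw [← T_zero, triangle_eq_sum_choose_mul_bell T_zero_zero
    (fun n => (T_zero (n + 1)).trans (T_self n).symm)
    (fun n j hj => encard_pivotValue_le_succ (Nat.lt_succ_of_le hj)) n.zero_le]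
  simp

end Count

section Fin

variable {n : ℕ}

/-- The operation induced by `f` on `Fin (n + 1)`, whose element `x` has depth `x.rev` below the
unit `Fin.last n`. Values of `f` larger than `n` are wrapped around; none occur when
`IsDepthLAlgebra n f` holds. -/
def finOp (n : ℕ) (f : ℕ → ℕ → ℕ) (x y : Fin (n + 1)) : Fin (n + 1) :=
  (Fin.ofNat (n + 1) (f x.rev y.rev)).rev

/-- The operation on depths corresponding to an operation on `Fin (n + 1)`, with a trivial tail
beyond `n`. -/
def depthOp (n : ℕ) (op : Fin (n + 1) → Fin (n + 1) → Fin (n + 1)) : ℕ → ℕ → ℕ :=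
  stabilize n fun a b => (op (Fin.ofNat (n + 1) a).rev (Fin.ofNat (n + 1) b).rev).rev

theorem val_ofNat_of_le {a : ℕ} (ha : a ≤ n) : (Fin.ofNat (n + 1) a : ℕ) = a :=
  Nat.mod_eq_of_lt (Nat.lt_succ_of_le ha)

theorem rev_finOp {f : ℕ → ℕ → ℕ} (hf : IsDepthLAlgebra n f) (x y : Fin (n + 1)) :
    ((finOp n f x y).rev : ℕ) = f x.rev y.rev := by
  rw [finOp, Fin.rev_rev, val_ofNat_of_le ((hf.apply_le _ _).trans y.rev.is_le)]

theorem isLAlgebra_finOp {f : ℕ → ℕ → ℕ} (hf : IsDepthLAlgebra n f) :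
    IsLAlgebra (finOp n f) (Fin.last n) :=
  .of_injective (φ := fun x => (x.rev : ℕ)) (by simpa using hf.isLAlgebra)
    (Fin.val_injective.comp Fin.rev_injective) (rev_finOp hf)

theorem eq_last_iff_rev_eq_zero {x : Fin (n + 1)} : x = Fin.last n ↔ (x.rev : ℕ) = 0 := by
  rw [Fin.val_eq_zero_iff, Fin.rev_eq_iff, Fin.rev_zero]

theorem finOp_eq_last_iff {f : ℕ → ℕ → ℕ} (hf : IsDepthLAlgebra n f) {x y : Fin (n + 1)} :
    finOp n f x y = Fin.last n ↔ x ≤ y := by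
  rw [eq_last_iff_rev_eq_zero, rev_finOp hf, hf.eq_zero_iff, Fin.val_fin_le, Fin.rev_le_rev]

theorem isDepthLAlgebra_depthOp {op : Fin (n + 1) → Fin (n + 1) → Fin (n + 1)}
    (hop : IsLAlgebra op (Fin.last n)) (le_iff : ∀ x y, op x y = Fin.last n ↔ x ≤ y) :
    IsDepthLAlgebra n (depthOp n op) := by
  refine isDepthLAlgebra_stabilize_of_forall_le (fun a b ha hb => ?_)
    (fun a b _ _ => Fin.is_le _) (fun b hb => ?_) fun a b c hab hbc hc => ?_
  · rw [← eq_last_iff_rev_eq_zero, le_iff, Fin.rev_le_rev, Fin.le_def, val_ofNat_of_le ha,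
      val_ofNat_of_le hb]
  · rw [Fin.ofNat_zero, Fin.rev_zero, hop.1, Fin.rev_rev, val_ofNat_of_le hb]
  · simp only [Fin.ofNat_val_eq_self, Fin.rev_rev]
    refine congrArg (fun x => (x.rev : ℕ)) (hop.op_op_op_of_op_eq ?_ _)
    rw [le_iff, Fin.rev_le_rev, Fin.le_def, val_ofNat_of_le (by lia), val_ofNat_of_le (by lia)]
    exact hab.le

theorem depthOp_finOp {f : ℕ → ℕ → ℕ} (hf : IsDepthLAlgebra n f) : depthOp n (finOp n f) = f := by
  refine stabilize_eq_of_forall_le hf fun a b hab hb => ?_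
  rw [rev_finOp hf, Fin.rev_rev, Fin.rev_rev, val_ofNat_of_le (by lia), val_ofNat_of_le hb]

theorem finOp_depthOp {op : Fin (n + 1) → Fin (n + 1) → Fin (n + 1)}
    (le_iff : ∀ x y, op x y = Fin.last n ↔ x ≤ y) : finOp n (depthOp n op) = op := by
  ext x y : 2
  rw [finOp, depthOp, stabilize_of_le _ y.rev.is_le] <;>
    simp only [Fin.ofNat_val_eq_self, Fin.rev_rev]
  rw [Fin.val_fin_le, Fin.rev_le_rev, ← eq_last_iff_rev_eq_zero, le_iff]
  exact id

theorem bijOn_finOp (n : ℕ) :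
    Set.BijOn (finOp n) {f | IsDepthLAlgebra n f}
      {op | IsLAlgebra op (Fin.last n) ∧ ∀ x y, op x y = Fin.last n ↔ x ≤ y} :=
  Set.InvOn.bijOn (f' := depthOp n)
    ⟨fun _ hf => depthOp_finOp hf, fun _ hop => finOp_depthOp hop.2⟩
    (fun _ hf => ⟨isLAlgebra_finOp hf, fun _ _ => finOp_eq_last_iff hf⟩)
    fun _ hop => isDepthLAlgebra_depthOp hop.1 hop.2

end Fin

/-- For every `n ≥ 1` (here: sets of size `n + 1`), the number of binary operations on
`Fin (n+1)` making it an L-algebra with logical unit the largest element and whose natural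
order (`x ≤ y` iff `x·y = e`) coincides with the standard linear order equals the Bell
number `B(n)`, i.e. the number of equivalence relations (`Setoid`s) on a set with `n`
elements. -/
theorem num_linear_L_algebras_eq_bell (n : ℕ) :
    Nat.card {op : Fin (n + 1) → Fin (n + 1) → Fin (n + 1) //
      IsLAlgebra op (Fin.last n) ∧ ∀ x y, (op x y = Fin.last n ↔ x ≤ y)} =
    Nat.card (Setoid (Fin n)) := by
  rw [card_setoid_eq_bell, Nat.card_fin]
  calc
    _ = Nat.card {f | IsDepthLAlgebra n f} := (Nat.card_congr ((bijOn_finOp n).equiv _)).symm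
    _ = n.bell := by
      rw [Nat.card_coe_set_eq, Set.ncard_def, encard_isDepthLAlgebra, ENat.toNat_natCast]
end

section
/- Every finite regular L-algebra X is isomorphic, as an L-algebra, to a finite nonempty upwards-closed subset Y of the negative cone of ℤ^m (with componentwise order, for some m ∈ ℕ) equipped with the operation a·b = 0 ⊓ (b − a); here Y being upwards-closed means that y ∈ Y, z ≤ 0 and z ≥ y imply z ∈ Y, and such Y is closed under the operation a·b = 0 ⊓ (b − a). -/
/-!
In a finite L-algebra satisfying `x ≤ y · x`, regularity makes `z ↦ z · x` a bijection of the
up-set of `x`, so that `x < q · x` whenever `x ≤ q ≠ e`. Hence every element is taken to `e` by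
repeated division by coatoms above it. For a coatom `p` let `mult p x` be the number of times `p`
can be divided out of `x`. Distinct coatoms satisfy `p · q = q`, so by the cycloid equation division
by `p` commutes with division by `q`; it lowers `mult p` by one and fixes `mult q`. Consequently
`mult p (x · y) = mult p y - mult p x` (truncated), and the negated multiplicities embed `X` into a
power of `ℤ`. Since single multiplicities can be lowered at will, the image is upwards-closed.
-/

theorem wellFoundedGT_of_finite_Ici {X : Type*} [Preorder X]
    (hfin : ∀ x : X, (Set.Ici x).Finite) : WellFoundedGT X := by
  have hanti : StrictAnti fun x : X => (Set.Ici x).ncard := fun x _ hxy =>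
    Set.ncard_lt_ncard (Set.Ici_ssubset_Ici.2 hxy) (hfin x)
  exact hanti.wellFoundedGT

/-- L-algebras as ordered structures: the operation `x · y` is written `x ⇨ y` and the logical unit
is `⊤`. The natural order is part of the data, so that Mathlib's coatoms can be used. -/
class LAlgebra (X : Type*) extends PartialOrder X, OrderTop X, HImp X where
  top_himp_eq (x : X) : ⊤ ⇨ x = x
  himp_eq_top_iff_le {x y : X} : x ⇨ y = ⊤ ↔ x ≤ y
  cycloid (x y z : X) : (x ⇨ y) ⇨ (x ⇨ z) = (y ⇨ x) ⇨ (y ⇨ z)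

/-- KL-algebras: L-algebras satisfying the law `x ≤ y · x`. Every semiregular L-algebra is one. -/
class KLAlgebra (X : Type*) extends LAlgebra X where
  le_himp (x y : X) : x ≤ y ⇨ x

/-- Strictness of the law `x ≤ q · x` for `q` above `x`. For KL-algebras with finite up-sets this is
the form in which regularity is exploited. -/
class KLAlgebra.IsStrict (X : Type*) [KLAlgebra X] : Prop where
  lt_himp_of_le {x q : X} : q ≠ ⊤ → x ≤ q → x < q ⇨ x

namespace LAlgebra

variable {X : Type*} [LAlgebra X] {x y q : X}

theorem himp_le_himp_of_le (q : X) (h : x ≤ y) : q ⇨ x ≤ q ⇨ y := by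
  rw [← himp_eq_top_iff_le, cycloid, himp_eq_top_iff_le.2 h, himp_eq_top_iff_le]
  exact le_top

theorem himp_himp_himp_of_le (h : x ≤ q) (y : X) : (q ⇨ x) ⇨ (q ⇨ y) = x ⇨ y := by
  rw [cycloid, himp_eq_top_iff_le.2 h, top_himp_eq]

end LAlgebra

namespace KLAlgebra

open LAlgebra

section Coatoms

variable {X : Type*} [KLAlgebra X] {p q : X}

theorem himp_eq_of_isCoatom (hp : IsCoatom p) (hq : IsCoatom q) (hpq : p ≠ q) : p ⇨ q = q := by
  refine (hq.le_iff.1 (le_himp q p)).resolve_left fun h => hpq ?_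
  exact ((hp.le_iff.1 (himp_eq_top_iff_le.1 h)).resolve_left hq.1).symm

theorem himp_le_iff_of_isCoatom (hp : IsCoatom p) (hq : IsCoatom q) (hpq : p ≠ q) (x : X) :
    p ⇨ x ≤ q ↔ x ≤ q := by
  refine ⟨(le_himp x p).trans, fun h => ?_⟩
  simpa only [himp_eq_of_isCoatom hp hq hpq] using himp_le_himp_of_le p h

theorem commute_himp_of_isCoatom (hp : IsCoatom p) (hq : IsCoatom q) (hpq : p ≠ q) :
    Function.Commute (p ⇨ ·) (q ⇨ ·) := fun x => by
  simpa only [himp_eq_of_isCoatom hp hq hpq, himp_eq_of_isCoatom hq hp hpq.symm]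
    using (cycloid p q x).symm

end Coatoms

/-- The multiplicity of `p` in `x`: how often one can apply `p ⇨ ·`, starting from `x`, before
leaving the elements below `p`. It is `0` by convention if one never leaves them. -/
noncomputable def mult {X : Type*} [KLAlgebra X] (p x : X) : ℕ :=
  sInf {n | ¬ (p ⇨ ·)^[n] x ≤ p}

section Multiplicity

variable {X : Type*} [KLAlgebra X] {p q x y : X}

theorem mult_eq_zero_of_not_le (h : ¬ x ≤ p) : mult p x = 0 :=
  Nat.sInf_eq_zero.2 (Or.inl h)

theorem mult_top (hp : IsCoatom p) : mult p ⊤ = 0 :=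
  mult_eq_zero_of_not_le fun h => hp.1 (top_le_iff.1 h)

theorem mult_himp_of_ne (hp : IsCoatom p) (hq : IsCoatom q) (hpq : p ≠ q) (x : X) :
    mult p (q ⇨ x) = mult p x := by
  have iterate_himp (n : ℕ) : (p ⇨ ·)^[n] (q ⇨ x) = q ⇨ (p ⇨ ·)^[n] x :=
    ((commute_himp_of_isCoatom hp hq hpq).iterate_left n).eq x
  simp only [mult, iterate_himp, himp_le_iff_of_isCoatom hq hp hpq.symm]

variable [WellFoundedGT X] [IsStrict X]

theorem exists_iterate_himp_not_le (hp : p ≠ ⊤) (x : X) : ∃ n, ¬ (p ⇨ ·)^[n] x ≤ p := by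
  induction x using WellFoundedGT.induction with
  | ind x ih =>
    by_cases hxp : x ≤ p
    · obtain ⟨n, hn⟩ := ih (p ⇨ x) (IsStrict.lt_himp_of_le hp hxp)
      exact ⟨n + 1, hn⟩
    · exact ⟨0, hxp⟩

theorem mult_pos_iff (hp : p ≠ ⊤) : 0 < mult p x ↔ x ≤ p := by
  refine ⟨fun h => not_not.1 fun hxp => h.ne' (mult_eq_zero_of_not_le hxp), fun hxp => ?_⟩
  refine Nat.pos_of_ne_zero fun h => ?_
  rcases Nat.sInf_eq_zero.1 h with h0 | hempty
  · exact h0 hxp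
  · exact Set.Nonempty.ne_empty (exists_iterate_himp_not_le hp x) hempty

theorem mult_himp_self (hp : p ≠ ⊤) (x : X) : mult p (p ⇨ x) = mult p x - 1 := by
  by_cases hxp : x ≤ p
  · have hshift : mult p (p ⇨ x) + 1 = mult p x := Nat.sInf_add ((mult_pos_iff hp).2 hxp)
    rw [← hshift, Nat.add_sub_cancel]
  · rw [mult_eq_zero_of_not_le hxp,
      mult_eq_zero_of_not_le fun h => hxp ((le_himp x p).trans h)]

@[elab_as_elim]
theorem coatom_induction {motive : X → Prop} (top : motive ⊤)
    (himp : ∀ x q, IsCoatom q → x ≤ q → motive (q ⇨ x) → motive x) (x : X) : motive x := by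
  induction x using WellFoundedGT.induction with
  | ind x ih =>
    rcases eq_top_or_exists_le_coatom x with rfl | ⟨q, hq, hxq⟩
    · exact top
    · exact himp x q hq hxq (ih _ (IsStrict.lt_himp_of_le hq.1 hxq))

theorem mult_himp (hp : IsCoatom p) (x y : X) : mult p (x ⇨ y) = mult p y - mult p x := by
  induction x using coatom_induction generalizing y with
  | top => rw [top_himp_eq, mult_top hp, Nat.sub_zero]
  | himp x q hq hxq ih =>
    rw [← himp_himp_himp_of_le hxq, ih]
    obtain rfl | hpq := eq_or_ne p q
    · have hpos : 0 < mult p x := (mult_pos_iff hp.1).2 hxq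
      rw [mult_himp_self hp.1, mult_himp_self hp.1]
      omega
    · rw [mult_himp_of_ne hp hq hpq, mult_himp_of_ne hp hq hpq]

theorem eq_top_of_mult_eq_zero (h : ∀ p, IsCoatom p → mult p x = 0) : x = ⊤ :=
  (eq_top_or_exists_le_coatom x).resolve_right fun ⟨p, hp, hxp⟩ =>
    ((mult_pos_iff hp.1).2 hxp).ne' (h p hp)

theorem le_of_mult_le (h : ∀ p, IsCoatom p → mult p y ≤ mult p x) : x ≤ y :=
  himp_eq_top_iff_le.1 <| eq_top_of_mult_eq_zero fun p hp => by
    rw [mult_himp hp, Nat.sub_eq_zero_of_le (h p hp)]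

theorem exists_mult_eq_of_le (x : X) (v : X → ℕ) (hv : ∀ p, IsCoatom p → v p ≤ mult p x) :
    ∃ y : X, ∀ p, IsCoatom p → mult p y = v p := by
  induction x using WellFoundedGT.induction with
  | ind x ih =>
    by_cases hx : ∀ p, IsCoatom p → mult p x = v p
    · exact ⟨x, hx⟩
    push Not at hx
    obtain ⟨q, hq, hne⟩ := hx
    have hlt : v q < mult q x := (hv q hq).lt_of_ne hne.symm
    have hxq : x ≤ q := (mult_pos_iff hq.1).1 (Nat.zero_lt_of_lt hlt)
    refine ih (q ⇨ x) (IsStrict.lt_himp_of_le hq.1 hxq) fun p hp => ?_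
    obtain rfl | hpq := eq_or_ne p q
    · rw [mult_himp_self hp.1]
      exact Nat.le_sub_one_of_lt hlt
    · rw [mult_himp_of_ne hp hq hpq]
      exact hv p hp

end Multiplicity

/-- The coordinates of `x` in `ℤ^ι` along an enumeration `c` of the coatoms: the negated
multiplicities. -/
noncomputable def coords {X ι : Type*} [KLAlgebra X] (c : ι ≃ {p : X // IsCoatom p}) (x : X) :
    ι → ℤ :=
  fun i => -(mult (c i : X) x : ℤ)

section Coordinates

variable {X ι : Type*} [KLAlgebra X] (c : ι ≃ {p : X // IsCoatom p})

theorem coords_nonpos (x : X) : coords c x ≤ 0 :=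
  fun _ => neg_nonpos.2 (Int.natCast_nonneg _)

variable [WellFoundedGT X] [IsStrict X]

theorem coords_himp (x y : X) : coords c (x ⇨ y) = 0 ⊓ (coords c y - coords c x) := by
  funext i
  simp only [coords, mult_himp (c i).2, Pi.inf_apply, Pi.sub_apply, Pi.zero_apply]
  omega

theorem coords_injective : Function.Injective (coords c) := by
  intro x y hxy
  have hmult (p : X) (hp : IsCoatom p) : mult p x = mult p y := by
    simpa [coords] using congrFun hxy (c.symm ⟨p, hp⟩)
  exact le_antisymm (le_of_mult_le fun p hp => (hmult p hp).ge)
    (le_of_mult_le fun p hp => (hmult p hp).le)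

theorem mem_range_coords_of_le {x : X} {z : ι → ℤ} (hz : z ≤ 0) (hxz : coords c x ≤ z) :
    z ∈ Set.range (coords c) := by
  classical
  let v : X → ℕ := fun p => if hp : IsCoatom p then (z (c.symm ⟨p, hp⟩)).natAbs else 0
  have hv (p : X) (hp : IsCoatom p) : v p ≤ mult p x := by
    have hz_p := hz (c.symm ⟨p, hp⟩)
    have hxz_p := hxz (c.symm ⟨p, hp⟩)
    simp only [coords, Equiv.apply_symm_apply, Pi.zero_apply] at hz_p hxz_p
    simp only [v, dif_pos hp]
    omega
  obtain ⟨y, hy⟩ := exists_mult_eq_of_le x v hv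
  refine ⟨y, funext fun i => ?_⟩
  have hz_i : z i ≤ 0 := hz i
  simp only [coords, hy _ (c i).2, v, dif_pos (c i).2, Subtype.coe_eta, Equiv.symm_apply_apply]
  omega

end Coordinates

theorem isStrict_of_finite_Ici {X : Type*} [KLAlgebra X] (hfin : ∀ x : X, (Set.Ici x).Finite)
    (hreg : ∀ x y : X, x ≤ y → ∃ z, x ≤ z ∧ z ⇨ x = y) : IsStrict X where
  lt_himp_of_le {x q} hq hxq := by
    have hmaps : Set.MapsTo (· ⇨ x) (Set.Ici x) (Set.Ici x) := fun z _ => le_himp x z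
    have hbij : Set.BijOn (· ⇨ x) (Set.Ici x) (Set.Ici x) :=
      ((hfin x).surjOn_iff_bijOn_of_mapsTo hmaps).1 fun y hy => hreg x y hy
    refine (le_himp x q).lt_of_ne fun h => hq ?_
    exact hbij.injOn hxq (Set.mem_Ici.2 le_top) (h.symm.trans (top_himp_eq x).symm)

end KLAlgebra

namespace IsLAlgebra

variable {X : Type*} {op : X → X → X} {e : X}

/-- The ordered structure of an L-algebra given by its operation and unit, with `x ≤ y` defined as
`op x y = e`. -/
abbrev toLAlgebra (hL : IsLAlgebra op e) : LAlgebra X where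
  le x y := op x y = e
  le_refl := hL.2.2.1
  le_trans x y z hxy hyz := by
    obtain ⟨unit_op, op_unit, -, cycloid, -⟩ := hL
    have h := cycloid x y z
    rwa [hxy, hyz, unit_op, op_unit] at h
  le_antisymm := hL.2.2.2.2
  top := e
  le_top := hL.2.1
  himp := op
  top_himp_eq := hL.1
  himp_eq_top_iff_le := Iff.rfl
  cycloid := hL.2.2.2.1

theorem op_op_eq_unit_of_semiregular (hL : IsLAlgebra op e)
    (hsemireg : ∀ x y z, op (op (op x y) z) (op (op y x) z) = op (op (op x y) z) z) (x y : X) :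
    op x (op y x) = e := by
  obtain ⟨unit_op, op_unit, op_self, -, -⟩ := hL
  have h := hsemireg y e x
  rwa [op_unit, unit_op, unit_op, op_self] at h

/-- The KL-algebra attached to a semiregular L-algebra. -/
abbrev toKLAlgebra (hL : IsLAlgebra op e)
    (hsemireg : ∀ x y z, op (op (op x y) z) (op (op y x) z) = op (op (op x y) z) z) :
    KLAlgebra X where
  toLAlgebra := hL.toLAlgebra
  le_himp := hL.op_op_eq_unit_of_semiregular hsemireg

end IsLAlgebra

open KLAlgebra in
theorem finite_regular_L_algebra_iso_young_diagram_general {X ι : Type*} [KLAlgebra X]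
    (hfin : ∀ x : X, (Set.Ici x).Finite)
    (hreg : ∀ x y : X, x ≤ y → ∃ z, x ≤ z ∧ z ⇨ x = y) (c : ι ≃ {p : X // IsCoatom p}) :
    ∃ Y : Set (ι → ℤ),
      Y.Nonempty ∧
      (∀ y ∈ Y, y ≤ 0) ∧
      (∀ y ∈ Y, ∀ z : ι → ℤ, z ≤ 0 → y ≤ z → z ∈ Y) ∧
      (∀ a ∈ Y, ∀ b ∈ Y, (0 ⊓ (b - a) : ι → ℤ) ∈ Y) ∧
      ∃ f : X ≃ Y,
        ∀ x y : X, (f (x ⇨ y) : ι → ℤ) = 0 ⊓ ((f y : ι → ℤ) - (f x : ι → ℤ)) := by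
  have := wellFoundedGT_of_finite_Ici hfin
  have := isStrict_of_finite_Ici hfin hreg
  refine ⟨Set.range (coords c), ⟨_, ⊤, rfl⟩, ?_, ?_, ?_,
    Equiv.ofInjective _ (coords_injective c), coords_himp c⟩
  · rintro _ ⟨x, rfl⟩
    exact coords_nonpos c x
  · rintro _ ⟨x, rfl⟩ z hz hxz
    exact mem_range_coords_of_le c hz hxz
  · rintro _ ⟨x, rfl⟩ _ ⟨y, rfl⟩
    exact ⟨x ⇨ y, coords_himp c x y⟩

/-- Every finite regular L-algebra is isomorphic, as an L-algebra, to a finite nonempty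
upwards-closed subset `Y` of the negative cone of `ℤ^m` (componentwise order, for some
`m ∈ ℕ`) equipped with the operation `a·b = 0 ⊓ (b - a)`; such a `Y` is closed under
this operation. -/
theorem finite_regular_L_algebra_iso_young_diagram
    {X : Type*} [Fintype X] (op : X → X → X) (e : X)
    (hL : IsLAlgebra op e)
    (hsemireg : ∀ x y z, op (op (op x y) z) (op (op y x) z) = op (op (op x y) z) z)
    (hreg : ∀ x y, op x y = e → ∃ z, op x z = e ∧ op z x = y) :
    ∃ (m : ℕ) (Y : Set (Fin m → ℤ)),
      Y.Nonempty ∧ Y.Finite ∧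
      (∀ y ∈ Y, y ≤ 0) ∧
      (∀ y ∈ Y, ∀ z : Fin m → ℤ, z ≤ 0 → y ≤ z → z ∈ Y) ∧
      (∀ a ∈ Y, ∀ b ∈ Y, (0 ⊓ (b - a) : Fin m → ℤ) ∈ Y) ∧
      ∃ f : X ≃ Y,
        ∀ x y : X, (f (op x y) : Fin m → ℤ) = 0 ⊓ ((f y : Fin m → ℤ) - (f x : Fin m → ℤ)) := by
  let _ : KLAlgebra X := hL.toKLAlgebra hsemireg
  obtain ⟨Y, hne, hneg, hup, hclosed, f, hf⟩ := finite_regular_L_algebra_iso_young_diagram_general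
    (fun x : X => Set.toFinite (Set.Ici x)) hreg (Finite.equivFin {p : X // IsCoatom p}).symm
  exact ⟨_, Y, hne, Finite.of_equiv X f, hneg, hup, hclosed, f, hf⟩
end

section
/- Let X be a finite linear L-algebra (an L-algebra whose natural order x ≤ y ⟺ x·y = e is total). If x, y, z ∈ X satisfy x ≥ y > z, then x·y > x·z. -/
/-!
Write `x·y` for `op x y` and `x ≤ y` for `x·y = e`. If `y ≤ x`, the cycloid equation gives
`(x·y)·(x·z) = (y·x)·(y·z) = e·(y·z) = y·z`, so `x·y ≤ x·z` exactly when `y ≤ z`. In particular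
`x·y = x·z` forces `y ≤ z`, which is impossible for `z < y`.
-/

namespace IsLAlgebra

variable {X : Type*} {op : X → X → X} {e x y z : X}

theorem unit_op (hL : IsLAlgebra op e) (x : X) : op e x = x := hL.1 x

theorem op_unit (hL : IsLAlgebra op e) (x : X) : op x e = e := hL.2.1 x

theorem op_self (hL : IsLAlgebra op e) (x : X) : op x x = e := hL.2.2.1 x

theorem cycloid (hL : IsLAlgebra op e) (x y z : X) :
    op (op x y) (op x z) = op (op y x) (op y z) :=
  hL.2.2.2.1 x y z

theorem le_antisymm (hL : IsLAlgebra op e) (hxy : op x y = e) (hyx : op y x = e) : x = y :=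
  hL.2.2.2.2 x y hxy hyx

theorem op_le_op_left (hL : IsLAlgebra op e) (hzy : op z y = e) (x : X) :
    op (op x z) (op x y) = e :=
  calc op (op x z) (op x y) = op (op z x) (op z y) := hL.cycloid x z y
    _ = op (op z x) e := by rw [hzy]
    _ = e := hL.op_unit _

theorem op_op_op_of_le (hL : IsLAlgebra op e) (hyx : op y x = e) (z : X) :
    op (op x y) (op x z) = op y z :=
  calc op (op x y) (op x z) = op (op y x) (op y z) := hL.cycloid x y z
    _ = op e (op y z) := by rw [hyx]
    _ = op y z := hL.unit_op _

theorem le_of_op_eq_op (hL : IsLAlgebra op e) (hyx : op y x = e) (h : op x y = op x z) :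
    op y z = e :=
  calc op y z = op (op x y) (op x z) := (hL.op_op_op_of_le hyx z).symm
    _ = op (op x z) (op x z) := by rw [h]
    _ = e := hL.op_self _

end IsLAlgebra

theorem linear_L_algebra_strict_mono_general
    {X : Type*} {op : X → X → X} {e x y z : X} (hL : IsLAlgebra op e)
    (hyx : op y x = e) (hzy : op z y = e) (hne : z ≠ y) :
    op (op x z) (op x y) = e ∧ op x z ≠ op x y := by
  refine ⟨hL.op_le_op_left hzy x, fun h => hne ?_⟩
  have hyz : op y z = e := hL.le_of_op_eq_op hyx h.symm
  exact hL.le_antisymm hzy hyz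

/-- In a finite linear L-algebra (natural order `x ≤ y ⟺ x·y = e` is total),
if `x ≥ y > z` then `x·y > x·z`. -/
theorem linear_L_algebra_strict_mono
    {X : Type*} [Fintype X] (op : X → X → X) (e : X)
    (hL : IsLAlgebra op e)
    (htotal : ∀ x y, op x y = e ∨ op y x = e)
    (x y z : X)
    (hyx : op y x = e)            -- y ≤ x
    (hzy : op z y = e) (hzy' : z ≠ y)  -- z < y
    : op (op x z) (op x y) = e ∧ op x z ≠ op x y :=
  linear_L_algebra_strict_mono_general hL hyx hzy hzy'
end

section
/- Let X be a finite regular L-algebra and x ∈ X. If x is dense (i.e. there exists y ∈ X with y ≤ x and x·y = y), then x = e. -/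
/-!
Let `y ≤ x` with `x·y = y`. Regularity says that the image of the up-set of `y` under `z ↦ z·y`
contains that up-set. As the up-set is finite, the map is injective on it; but it takes the
value `y` both at `x` and at `e`.
-/

/-- The up-set `↑y = {z | y ≤ z}` for the relation `y ≤ z ↔ y·z = e`, which is the natural order
when `op` and `e` form an L-algebra. -/
def upSet {X : Type*} (op : X → X → X) (e y : X) : Set X :=
  {z | op y z = e}

theorem injOn_of_finite_of_surjOn_self {α : Type*} {f : α → α} {s : Set α} (hs : s.Finite)
    (hf : Set.SurjOn f s s) : Set.InjOn f s :=
  hs.injOn_of_encard_image_eq (le_antisymm (Set.encard_image_le f s) (Set.encard_le_encard hf))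

theorem finite_regular_L_algebra_dense_eq_unit_general
    {X : Type*} {op : X → X → X} {e x y : X}
    (unit_op : op e y = y) (op_unit : op y e = e) (hfin : (upSet op e y).Finite)
    (hreg : ∀ w, op y w = e → ∃ z, op y z = e ∧ op z y = w)
    (hyx : op y x = e) (hxy : op x y = y) :
    x = e := by
  have hsurj : Set.SurjOn (op · y) (upSet op e y) (upSet op e y) := hreg
  have hinj : Set.InjOn (op · y) (upSet op e y) := injOn_of_finite_of_surjOn_self hfin hsurj
  exact hinj hyx op_unit (hxy.trans unit_op.symm)

/-- In a finite regular L-algebra, every dense element equals the logical unit: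
if there exists `y ≤ x` (i.e. `y·x = e`) with `x·y = y`, then `x = e`. -/
theorem finite_regular_L_algebra_dense_eq_unit
    {X : Type*} [Fintype X] (op : X → X → X) (e : X)
    (hL : IsLAlgebra op e)
    (hsemireg : ∀ x y z, op (op (op x y) z) (op (op y x) z) = op (op (op x y) z) z)
    (hreg : ∀ x y, op x y = e → ∃ z, op x z = e ∧ op z x = y)
    (x : X) (hdense : ∃ y, op y x = e ∧ op x y = y) :
    x = e := by
  obtain ⟨y, hyx, hxy⟩ := hdense
  exact finite_regular_L_algebra_dense_eq_unit_general (hL.1 y) (hL.2.1 y) (Set.toFinite _)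
    (hreg y) hyx hxy
end

section
/- Let X be a finite regular L-algebra, and let x, y ∈ X be distinct elements that are both covered by the logical unit e (i.e. x < e, y < e, and there is no z with x < z < e or y < z < e, in the natural order). Then x·y = y. -/
/-- A logical unit of a binary operation: the part of the L-algebra axioms that involves neither
the cycloid equation nor antisymmetry. The relation `x ≤ y` is written `op x y = e`. -/
structure IsLogicalUnit {X : Type*} (op : X → X → X) (e : X) : Prop where
  unit_op : ∀ x, op e x = x
  op_unit : ∀ x, op x e = e
  op_self : ∀ x, op x x = e

/-- Semiregularity of a binary operation, the equational half of regularity of an L-algebra. -/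
def IsSemiregular {X : Type*} (op : X → X → X) : Prop :=
  ∀ x y z, op (op (op x y) z) (op (op y x) z) = op (op (op x y) z) z

section

variable {X : Type*} {op : X → X → X} {e : X}

theorem IsLAlgebra.isLogicalUnit (hL : IsLAlgebra op e) : IsLogicalUnit op e :=
  ⟨hL.1, hL.2.1, hL.2.2.1⟩

theorem IsSemiregular.le_op (hop : IsSemiregular op) (he : IsLogicalUnit op e) (x y : X) :
    op y (op x y) = e :=
  calc
    op y (op x y) = op (op (op x e) y) (op (op e x) y) := by
      rw [he.op_unit, he.unit_op, he.unit_op]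
    _ = op (op (op x e) y) y := hop x e y
    _ = op y y := by rw [he.op_unit, he.unit_op]
    _ = e := he.op_self y

theorem finite_regular_L_algebra_coatoms_general (he : IsLogicalUnit op e)
    (hop : IsSemiregular op) {x y : X} (hy : ∀ z, op y z = e → z = y ∨ z = e)
    (hxy : op x y ≠ e) : op x y = y :=
  (hy (op x y) (hop.le_op he x y)).resolve_right hxy

end

/-- In a finite regular L-algebra, if `x ≠ y` are both covered by the logical unit `e`
in the natural order (`a ≤ b ⟺ a·b = e`), then `x·y = y`. -/
theorem finite_regular_L_algebra_coatoms
    {X : Type*} [Fintype X] (op : X → X → X) (e : X)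
    (hL : IsLAlgebra op e)
    (hsemireg : ∀ x y z, op (op (op x y) z) (op (op y x) z) = op (op (op x y) z) z)
    (hreg : ∀ x y, op x y = e → ∃ z, op x z = e ∧ op z x = y)
    (x y : X) (hxy : x ≠ y)
    (hx : x ≠ e ∧ ∀ z, op x z = e → z = x ∨ z = e)   -- x is covered by e
    (hy : y ≠ e ∧ ∀ z, op y z = e → z = y ∨ z = e)   -- y is covered by e
    : op x y = y :=
  finite_regular_L_algebra_coatoms_general hL.isLogicalUnit hsemireg hy.2
    fun hle => (hx.2 y hle).elim hxy.symm hy.1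
end

section
/- If X is a semiregular L-algebra, then x ≤ y·x for all x, y ∈ X; that is, x·(y·x) = e holds for all x, y ∈ X. -/
theorem semiregular_L_algebra_le_general
    {X : Type*} (op : X → X → X) (e : X)
    (unit_op : ∀ x, op e x = x) (op_unit : ∀ x, op x e = e) (op_self : ∀ x, op x x = e)
    (hsemireg : ∀ x y z, op (op (op x y) z) (op (op y x) z) = op (op (op x y) z) z)
    (x y : X) : op x (op y x) = e :=
  calc
    op x (op y x) = op (op (op y e) x) (op (op e y) x) := by simp only [op_unit, unit_op]
    _ = op (op (op y e) x) x := hsemireg y e x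
    _ = op x x := by simp only [op_unit, unit_op]
    _ = e := op_self x

/-- In a semiregular L-algebra, `x ≤ y·x` for all `x, y`; that is, `x·(y·x) = e`. -/
theorem semiregular_L_algebra_le
    {X : Type*} (op : X → X → X) (e : X)
    (hL : IsLAlgebra op e)
    (hsemireg : ∀ x y z, op (op (op x y) z) (op (op y x) z) = op (op (op x y) z) z) :
    ∀ x y : X, op x (op y x) = e := by
  obtain ⟨unit_op, op_unit, op_self, -, -⟩ := hL
  exact semiregular_L_algebra_le_general op e unit_op op_unit op_self hsemireg
end
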